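/- Abstract Lagrange multiplier rule: let X be a Banach space, φ : X → ℝ ∪ {+∞} lower semicontinuous and proper, S ⊆ X closed, and x̄ a minimizer of φ over S. Set R̃ := epi φ ⊆ X × ℝ. Let D_S be a uniform tangent set to S at x̄, D_{S̃} := D_S × [−1, 0], and D_{R̃} a uniform tangent set to R̃ at (x̄, φ(x̄)). If D_{S̃} − D_{R̃} is quasisolid, then there exists (ξ, η) ∈ X* × ℝ with: (i) (ξ, η) ≠ (0, 0); (ii) η ∈ {0, 1}; (iii) ⟨ξ, v⟩ ≤ 0 for all v ∈ D_S; (iv) ⟨ξ, w⟩ + η·s ≥ 0 for all (w, s) ∈ D_{R̃}. -/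

import Mathlib

open Metric Pointwise

/-- `D` is a uniform tangent set to `E` at `e₀` (with the ambient norm). -/
def IsUniformTangentSet {Y : Type*} [NormedAddCommGroup Y] [NormedSpace ℝ Y]
    (E : Set Y) (e₀ : Y) (D : Set Y) : Prop :=
  Bornology.IsBounded D ∧
    ∀ ε > (0:ℝ), ∃ δ > (0:ℝ), ∀ d ∈ D, ∀ e ∈ E, ‖e - e₀‖ ≤ δ →
      ∃ lam > (0:ℝ), ∀ t ∈ Set.Icc (0:ℝ) lam,
        ∃ b : Y, ‖b‖ ≤ 1 ∧ e + t • (d + ε • b) ∈ E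

/-- A set is quasisolid if its closed convex hull has nonempty interior within its closed
affine hull. -/
def Quasisolid {Y : Type*} [NormedAddCommGroup Y] [NormedSpace ℝ Y] (A : Set Y) : Prop :=
  ∃ y₀ ∈ closure (convexHull ℝ A),
    ∃ z ∈ closure (convexHull ℝ ((· - y₀) '' A)), ∃ r > (0:ℝ),
      ((Submodule.span ℝ ((· - y₀) '' A)).topologicalClosure : Set Y) ∩ Metric.ball z r ⊆
        closure (convexHull ℝ ((· - y₀) '' A))

/-!
Ekeland's principle upgrades a uniform tangent set of a closed set `E` to directions that are
tangent to `E`, up to an arbitrarily small relative error, uniformly in the base point and the step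
length; such directions form a convex set. Hence, if `0` were interior to the closed convex hull of
the difference of the tangent sets of `S × (-∞, φ(x̄)]` and of `epi φ`, then from any pair of nearby
points of these two sets one could decrease the distance of their difference to any prescribed small
vector at a fixed rate. By Ekeland's principle again, the difference `S × (-∞, φ(x̄)] - epi φ` would
be a neighbourhood of `0`. It contains no `(0, h)` with `h > 0`, since `x̄` is a minimizer.

So `0` is not interior. Adjoining `0` to both tangent sets keeps them uniformly tangent and enlarges
the span of their difference by at most two dimensions, so the closed convex hull either has
nonempty interior, or lies in a proper closed subspace. In both cases the Hahn–Banach theorem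
provides a nonzero functional separating the two tangent sets, and rescaling it yields the
multiplier.
-/

open Filter Set Topology

section DecreasePrinciple

variable {Z : Type*} {f : Z → ℝ} {σ : ℝ}

/-- The lower section of `z` in the Bishop–Phelps order attached to `f` and the slope `σ`: the
points reachable from `z` while `f` drops at rate at least `σ`. -/
def descentSet [PseudoMetricSpace Z] (f : Z → ℝ) (σ : ℝ) (z : Z) : Set Z :=
  {w | f w + σ * dist z w ≤ f z}

theorem self_mem_descentSet [PseudoMetricSpace Z] (z : Z) : z ∈ descentSet f σ z := by
  simp [descentSet]

theorem descentSet_subset_descentSet [PseudoMetricSpace Z] (hσ : 0 ≤ σ) {z w : Z}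
    (hw : w ∈ descentSet f σ z) : descentSet f σ w ⊆ descentSet f σ z := fun u hu => calc
  f u + σ * dist z u ≤ f u + σ * (dist z w + dist w u) := by gcongr; exact dist_triangle z w u
  _ = f u + σ * dist w u + σ * dist z w := by ring
  _ ≤ f w + σ * dist z w := by gcongr; exact hu
  _ ≤ f z := hw

theorem isClosed_descentSet [PseudoMetricSpace Z] (hf : LowerSemicontinuous f) (z : Z) :
    IsClosed (descentSet f σ z) :=
  have hcont : Continuous fun w => σ * dist z w := by fun_prop
  (hf.add hcont.lowerSemicontinuous).isClosed_preimage (f z)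

theorem exists_descentSet_subset_closedBall [PseudoMetricSpace Z] (hbdd : BddBelow (range f))
    (hσ : 0 < σ) (z : Z) {ε : ℝ} (hε : 0 < ε) :
    ∃ w ∈ descentSet f σ z, descentSet f σ w ⊆ closedBall w ε := by
  have hbdd' : BddBelow (f '' descentSet f σ z) := hbdd.mono (image_subset_range f _)
  have hne : (f '' descentSet f σ z).Nonempty := ⟨f z, mem_image_of_mem f (self_mem_descentSet z)⟩
  obtain ⟨_, ⟨w, hw, rfl⟩, hw_lt⟩ :=
    exists_lt_of_csInf_lt hne (lt_add_of_pos_right _ (mul_pos hσ hε))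
  refine ⟨w, hw, fun u hu => ?_⟩
  have hinf_le : sInf (f '' descentSet f σ z) ≤ f u :=
    csInf_le hbdd' (mem_image_of_mem f (descentSet_subset_descentSet hσ.le hw hu))
  have hdist : σ * dist w u ≤ σ * ε := by
    have hu' : f u + σ * dist w u ≤ f w := hu
    linarith
  rw [mem_closedBall, dist_comm]
  exact le_of_mul_le_mul_left hdist hσ

theorem ekeland_variational_principle [MetricSpace Z] [CompleteSpace Z]
    (hf : LowerSemicontinuous f) (hbdd : BddBelow (range f)) (hσ : 0 < σ) (z₀ : Z) :
    ∃ z ∈ descentSet f σ z₀, descentSet f σ z = {z} := by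
  choose next hnext_mem hnext_ball using fun (n : ℕ) (z : Z) =>
    exists_descentSet_subset_closedBall hbdd hσ z (Nat.one_div_pos_of_nat (α := ℝ) (n := n))
  let x : ℕ → Z := fun n => Nat.rec z₀ next n
  have hanti : Antitone fun n => descentSet f σ (x n) :=
    antitone_nat_of_succ_le fun n => descentSet_subset_descentSet hσ.le (hnext_mem n (x n))
  have hball (n : ℕ) : descentSet f σ (x (n + 1)) ⊆ closedBall (x (n + 1)) (1 / ((n : ℝ) + 1)) :=
    hnext_ball n (x n)
  have hdiam : Tendsto (fun n => diam (descentSet f σ (x (n + 1)))) atTop (𝓝 0) := by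
    refine squeeze_zero (fun n => diam_nonneg)
      (fun n => diam_le_of_subset_closedBall (by positivity) (hball n)) ?_
    simpa using tendsto_one_div_add_atTop_nhds_zero_nat.const_mul (2 : ℝ)
  have hbounded (n : ℕ) : Bornology.IsBounded (descentSet f σ (x (n + 1))) :=
    isBounded_closedBall.subset (hball n)
  obtain ⟨z, hz⟩ := nonempty_iInter_of_nonempty_biInter
    (fun n => isClosed_descentSet hf (x (n + 1))) hbounded
    (fun N => ⟨x (N + 1), mem_iInter₂.2 fun n hn =>
      hanti (Nat.succ_le_succ hn) (self_mem_descentSet _)⟩) hdiam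
  rw [mem_iInter] at hz
  refine ⟨z, hanti zero_le_one (hz 0), Subset.antisymm (fun w hw => ?_) ?_⟩
  · refine dist_le_zero.1 (ge_of_tendsto' hdiam fun n => ?_)
    exact dist_le_diam_of_mem (hbounded n) (descentSet_subset_descentSet hσ.le (hz n) hw) (hz n)
  · exact singleton_subset_iff.2 (self_mem_descentSet z)

theorem exists_eq_zero_of_descent [MetricSpace Z] [CompleteSpace Z]
    (hf : LowerSemicontinuous f) (hf0 : ∀ z, 0 ≤ f z) (hσ : 0 < σ) (z₀ : Z)
    (hdescent : ∀ z ∈ descentSet f σ z₀, f z ≠ 0 → ∃ w ∈ descentSet f σ z, f w < f z) :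
    ∃ z ∈ descentSet f σ z₀, f z = 0 := by
  obtain ⟨z, hz, hz_min⟩ :=
    ekeland_variational_principle hf ⟨0, forall_mem_range.2 hf0⟩ hσ z₀
  refine ⟨z, hz, by_contra fun hne => ?_⟩
  obtain ⟨w, hw, hlt⟩ := hdescent z hz hne
  rw [hz_min, mem_singleton_iff] at hw
  exact hlt.ne (congrArg f hw)

end DecreasePrinciple

theorem tendsto_const_mul_nhdsGE_zero {c : ℝ} (hc : 0 ≤ c) :
    Tendsto (c * ·) (𝓝[≥] 0) (𝓝[≥] 0) := by
  have hcont : Tendsto (c * ·) (𝓝 0) (𝓝 0) := (continuous_const_mul c).tendsto' 0 0 (mul_zero c)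
  exact tendsto_nhdsWithin_iff.2 ⟨hcont.mono_left nhdsWithin_le_nhds,
    eventually_mem_nhdsWithin.mono fun t ht => mul_nonneg hc ht⟩

theorem tendsto_nhdsWithin_of_dist_le {Z ι : Type*} [PseudoMetricSpace Z] {s : Set Z} {z : Z}
    {l : Filter ι} {g x : ι → Z} {t : ι → ℝ}
    (hgE : ∀ᶠ i in l, g i ∈ s) (hx : Tendsto x l (𝓝 z)) (ht : Tendsto t l (𝓝 0))
    (hg : ∀ᶠ i in l, dist (x i) (g i) ≤ t i) : Tendsto g l (𝓝[s] z) :=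
  tendsto_nhdsWithin_iff.2
    ⟨hx.congr_dist (squeeze_zero' (.of_forall fun _ => dist_nonneg) hg ht), hgE⟩

section ApproxTangentSet

variable {Y : Type*} [NormedAddCommGroup Y] [NormedSpace ℝ Y] {E D : Set Y} {e e₀ d : Y} {ε : ℝ}

/-- The directions that are tangent to `E` up to the relative error `ε`, uniformly over the base
points of `E` near `e`. Their intersection over all `ε > 0` is the Clarke tangent cone to `E` at
`e`. -/
def approxTangentSet (E : Set Y) (ε : ℝ) (e : Y) : Set Y :=
  {d | ∀ᶠ p : Y × ℝ in 𝓝[E] e ×ˢ 𝓝[≥] 0, (E ∩ closedBall (p.1 + p.2 • d) (ε * p.2)).Nonempty}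

theorem convex_approxTangentSet (E : Set Y) (ε : ℝ) (e : Y) :
    Convex ℝ (approxTangentSet E ε e) := by
  intro d₁ hd₁ d₂ hd₂ a b ha hb hab
  -- From a base point, move for time `a * t` along `d₁`, then for time `b * t` along `d₂`.
  have htime {c : ℝ} (hc : 0 ≤ c) :
      Tendsto (fun p : Y × ℝ => c * p.2) (𝓝[E] e ×ˢ 𝓝[≥] 0) (𝓝[≥] 0) :=
    (tendsto_const_mul_nhdsGE_zero hc).comp tendsto_snd
  have hfirst : ∀ᶠ p : Y × ℝ in 𝓝[E] e ×ˢ 𝓝[≥] 0,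
      (E ∩ closedBall (p.1 + (a * p.2) • d₁) (ε * (a * p.2))).Nonempty :=
    (tendsto_fst.prodMk (htime ha)).eventually hd₁
  choose! g hg using fun (p : Y × ℝ)
    (hp : (E ∩ closedBall (p.1 + (a * p.2) • d₁) (ε * (a * p.2))).Nonempty) => hp
  have hg_first := hfirst.mono hg
  have htime0 : Tendsto (fun p : Y × ℝ => a * p.2) (𝓝[E] e ×ˢ 𝓝[≥] 0) (𝓝 0) :=
    tendsto_nhds_of_tendsto_nhdsWithin (htime ha)
  have hg_lim : Tendsto g (𝓝[E] e ×ˢ 𝓝[≥] 0) (𝓝[E] e) := by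
    refine tendsto_nhdsWithin_of_dist_le (hg_first.mono fun p hp => hp.1)
      (x := fun p => p.1 + (a * p.2) • d₁) (t := fun p => ε * (a * p.2)) ?_ ?_
      (hg_first.mono fun p hp => mem_closedBall'.1 hp.2)
    · simpa using (tendsto_nhds_of_tendsto_nhdsWithin tendsto_fst).add (htime0.smul_const d₁)
    · simpa using htime0.const_mul ε
  filter_upwards [hg_first, (hg_lim.prodMk (htime hb)).eventually hd₂]
    with p ⟨_, hgp⟩ ⟨y, hyE, hy⟩
  refine ⟨y, hyE, ?_⟩
  rw [mem_closedBall] at hgp hy ⊢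
  calc dist y (p.1 + p.2 • (a • d₁ + b • d₂))
      ≤ dist y (g p + (b * p.2) • d₂)
        + dist (g p + (b * p.2) • d₂) (p.1 + p.2 • (a • d₁ + b • d₂)) := dist_triangle _ _ _
    _ = dist y (g p + (b * p.2) • d₂) + dist (g p) (p.1 + (a * p.2) • d₁) := by
        rw [show p.1 + p.2 • (a • d₁ + b • d₂) = p.1 + (a * p.2) • d₁ + (b * p.2) • d₂ by module,
          dist_add_right]
    _ ≤ ε * (b * p.2) + ε * (a * p.2) := add_le_add hy hgp
    _ = ε * p.2 := by linear_combination (ε * p.2) * hab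

theorem norm_smul_add_smul_le (hε : 0 ≤ ε) {s t : ℝ} (hs : s ∈ Icc 0 t) {w : Y} (hw : ‖w‖ ≤ t) :
    ‖s • d + ε • w‖ ≤ t * (‖d‖ + ε) := calc
  ‖s • d + ε • w‖ ≤ ‖s • d‖ + ‖ε • w‖ := norm_add_le _ _
  _ = s * ‖d‖ + ε * ‖w‖ := by
    rw [norm_smul, norm_smul, Real.norm_of_nonneg hs.1, Real.norm_of_nonneg hε]
  _ ≤ t * ‖d‖ + ε * t := by gcongr; exact hs.2
  _ = t * (‖d‖ + ε) := by ring

theorem exists_mem_closedBall_add_smul_eq (hε : 0 < ε) {x y w : Y} {τ : ℝ}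
    (hy : y ∈ closedBall (x + ε • w) (ε * τ)) : ∃ w' ∈ closedBall w τ, x + ε • w' = y := by
  have hsmul : ε • ε⁻¹ • (y - x) = y - x := smul_inv_smul₀ hε.ne' _
  refine ⟨ε⁻¹ • (y - x), ?_, by rw [hsmul, add_sub_cancel]⟩
  refine mem_closedBall.2 (le_of_mul_le_mul_left ?_ hε)
  calc ε * dist (ε⁻¹ • (y - x)) w = dist (ε • ε⁻¹ • (y - x)) (ε • w) := by
        rw [dist_smul₀, Real.norm_of_nonneg hε.le]
    _ = dist y (x + ε • w) := by rw [hsmul, dist_eq_norm, dist_eq_norm, sub_sub]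
    _ ≤ ε * τ := hy

theorem exists_add_smul_mem_of_frequently (hε : 0 < ε) {s t : ℝ} {w : Y} (hst : s < t)
    (h : ∃ᶠ τ in 𝓝[>] 0, (E ∩ closedBall (e + s • d + ε • w + τ • d) (ε * τ)).Nonempty) :
    ∃ τ ∈ Ioo 0 (t - s), ∃ w' ∈ closedBall w τ, e + (s + τ) • d + ε • w' ∈ E := by
  obtain ⟨τ, ⟨y, hyE, hy⟩, hτ⟩ := (h.and_eventually (Ioo_mem_nhdsGT (sub_pos.2 hst))).exists
  rw [add_right_comm, add_assoc e, ← add_smul] at hy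
  obtain ⟨w', hw', rfl⟩ := exists_mem_closedBall_add_smul_eq hε hy
  exact ⟨τ, hτ, w', hw', hyE⟩

theorem inter_closedBall_nonempty_of_frequently [CompleteSpace Y] (hE : IsClosed E) (hε : 0 < ε)
    (he : e ∈ E) {t : ℝ} (ht : 0 ≤ t)
    (h : ∀ e' ∈ E ∩ closedBall e (t * (‖d‖ + ε)),
      ∃ᶠ τ in 𝓝[>] 0, (E ∩ closedBall (e' + τ • d) (ε * τ)).Nonempty) :
    (E ∩ closedBall (e + t • d) (ε * t)).Nonempty := by
  -- A pair `(s, w)` encodes the point `e + s • d + ε • w` reached at time `s` with error `ε • w`;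
  -- the descent principle is applied to the remaining time `t - s`.
  let P : Set (ℝ × Y) := {p | p.1 ∈ Icc 0 t ∧ e + p.1 • d + ε • p.2 ∈ E}
  let remaining : P → ℝ := fun p => t - p.1.1
  have hP : IsClosed P :=
    (isClosed_Icc.preimage continuous_fst).inter (hE.preimage (by fun_prop))
  have := hP.completeSpace_coe
  have hcont : Continuous remaining := by fun_prop
  let start : P := ⟨(0, 0), ⟨le_rfl, ht⟩, by simpa using he⟩
  have herror {p : P} (hp : p ∈ descentSet remaining 1 start) : ‖p.1.2‖ ≤ p.1.1 := by
    have hdescent : t - p.1.1 + 1 * dist start p ≤ t - 0 := hp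
    have hle : dist (0 : Y) p.1.2 ≤ dist start p := le_max_right (dist (0 : ℝ) p.1.1) _
    rw [dist_zero_left] at hle
    linarith
  have hstep (p : P) (hp : p ∈ descentSet remaining 1 start) (hne : remaining p ≠ 0) :
      ∃ q ∈ descentSet remaining 1 p, remaining q < remaining p := by
    obtain ⟨⟨s, w⟩, ⟨hs0, hst⟩, hmem⟩ := p
    have hnear : e + s • d + ε • w ∈ closedBall e (t * (‖d‖ + ε)) := by
      rw [mem_closedBall, add_assoc, dist_self_add_left]
      exact norm_smul_add_smul_le hε.le ⟨hs0, hst⟩ ((herror hp).trans hst)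
    have hlt : s < t := hst.lt_of_ne' (sub_ne_zero.1 hne)
    obtain ⟨τ, ⟨hτ0, hτ⟩, w', hw', hmem'⟩ :=
      exists_add_smul_mem_of_frequently hε hlt (h _ ⟨hmem, hnear⟩)
    refine ⟨⟨(s + τ, w'), ⟨by positivity, by linarith⟩, hmem'⟩, ?_, by simpa [remaining] using hτ0⟩
    have hdist : dist (s, w) (s + τ, w') ≤ τ :=
      max_le (by simp [abs_of_pos hτ0]) (mem_closedBall'.1 hw')
    change t - (s + τ) + 1 * dist (s, w) (s + τ, w') ≤ t - s
    linarith
  obtain ⟨⟨⟨s, w⟩, _, hmem⟩, hp, hs⟩ := exists_eq_zero_of_descent hcont.lowerSemicontinuous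
    (fun p => sub_nonneg.2 p.2.1.2) one_pos start hstep
  obtain rfl : t = s := sub_eq_zero.1 hs
  refine ⟨_, hmem, ?_⟩
  rw [mem_closedBall, dist_self_add_left, norm_smul, Real.norm_of_nonneg hε.le]
  exact mul_le_mul_of_nonneg_left (herror hp) hε.le

theorem mem_approxTangentSet_of_frequently [CompleteSpace Y] (hE : IsClosed E) (hε : 0 < ε)
    (h : ∀ᶠ e' in 𝓝[E] e, ∃ᶠ t in 𝓝[>] 0, (E ∩ closedBall (e' + t • d) (ε * t)).Nonempty) :
    d ∈ approxTangentSet E ε e := by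
  obtain ⟨δ, hδ, hball⟩ := Metric.mem_nhdsWithin_iff.1 h
  have hreach : Tendsto (fun p : Y × ℝ => dist p.1 e + p.2 * (‖d‖ + ε))
      (𝓝[E] e ×ˢ 𝓝[≥] 0) (𝓝 0) := by
    have hcont : Continuous fun p : Y × ℝ => dist p.1 e + p.2 * (‖d‖ + ε) := by fun_prop
    refine (hcont.tendsto' (e, 0) 0 (by simp)).mono_left ?_
    rw [nhds_prod_eq]
    exact prod_mono nhdsWithin_le_nhds nhdsWithin_le_nhds
  filter_upwards [hreach.eventually_lt_const hδ, tendsto_fst.eventually eventually_mem_nhdsWithin,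
    tendsto_snd.eventually eventually_mem_nhdsWithin] with p hp hpE hp0
  refine inter_closedBall_nonempty_of_frequently hE hε hpE hp0 fun e' he' => hball ⟨?_, he'.1⟩
  calc dist e' e ≤ dist e' p.1 + dist p.1 e := dist_triangle _ _ _
    _ ≤ dist p.1 e + p.2 * (‖d‖ + ε) := by rw [add_comm]; gcongr; exact he'.2
    _ < δ := hp

theorem eventually_nonempty_of_mem_approxTangentSet (he : e ∈ E)
    (hd : d ∈ approxTangentSet E ε e) :
    ∀ᶠ t in 𝓝[>] (0 : ℝ), (E ∩ closedBall (e + t • d) (ε * t)).Nonempty :=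
  nhdsWithin_mono 0 Ioi_subset_Ici_self ((Eventually.curry hd).self_of_nhdsWithin he)

theorem inter_closedBall_nonempty_of_add_smul_mem (hε : 0 ≤ ε) {t : ℝ} (ht : 0 ≤ t)
    (h : ∃ b : Y, ‖b‖ ≤ 1 ∧ e + t • (d + ε • b) ∈ E) :
    (E ∩ closedBall (e + t • d) (ε * t)).Nonempty := by
  obtain ⟨b, hb, hmem⟩ := h
  refine ⟨_, hmem, ?_⟩
  rw [mem_closedBall, dist_add_left, smul_add, dist_self_add_left, smul_smul, norm_smul,
    Real.norm_of_nonneg (by positivity), mul_comm t ε]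
  exact mul_le_of_le_one_right (by positivity) hb

theorem IsUniformTangentSet.eventually_subset_approxTangentSet [CompleteSpace Y]
    (hD : IsUniformTangentSet E e₀ D) (hE : IsClosed E) (hε : 0 < ε) :
    ∀ᶠ e in 𝓝 e₀, D ⊆ approxTangentSet E ε e := by
  obtain ⟨δ, hδ, h⟩ := hD.2 ε hε
  filter_upwards [eventually_eventually_nhds.2 (closedBall_mem_nhds e₀ hδ)] with e he d hd
  refine mem_approxTangentSet_of_frequently hE hε ?_
  filter_upwards [nhdsWithin_le_nhds he, eventually_mem_nhdsWithin] with e' he' he'E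
  obtain ⟨lam, hlam, hmem⟩ := h d hd e' he'E (mem_closedBall_iff_norm.1 he')
  refine Eventually.frequently ?_
  filter_upwards [Ioc_mem_nhdsGT hlam] with t ht
  exact inter_closedBall_nonempty_of_add_smul_mem hε.le ht.1.le (hmem t ⟨ht.1.le, ht.2⟩)

theorem IsUniformTangentSet.eventually_convexHull_subset_approxTangentSet [CompleteSpace Y]
    (hD : IsUniformTangentSet E e₀ D) (hE : IsClosed E) (hε : 0 < ε) :
    ∀ᶠ e in 𝓝 e₀, convexHull ℝ D ⊆ approxTangentSet E ε e :=
  (hD.eventually_subset_approxTangentSet hE hε).mono fun e he =>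
    convexHull_min he (convex_approxTangentSet E ε e)

end ApproxTangentSet

section UniformTangentSet

variable {Y Y' : Type*} [NormedAddCommGroup Y] [NormedSpace ℝ Y] [NormedAddCommGroup Y']
  [NormedSpace ℝ Y'] {E D : Set Y} {e₀ : Y} {E' D' : Set Y'} {e₀' : Y'}

theorem IsUniformTangentSet.insert_zero (hD : IsUniformTangentSet E e₀ D) :
    IsUniformTangentSet E e₀ (insert 0 D) := by
  refine ⟨hD.1.insert 0, fun ε hε => ?_⟩
  obtain ⟨δ, hδ, h⟩ := hD.2 ε hε
  refine ⟨δ, hδ, forall_mem_insert.2 ⟨fun e he _ => ?_, h⟩⟩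
  exact ⟨1, one_pos, fun t _ => ⟨0, by simp, by simpa using he⟩⟩

theorem IsUniformTangentSet.prod (hD : IsUniformTangentSet E e₀ D)
    (hD' : IsUniformTangentSet E' e₀' D') :
    IsUniformTangentSet (E ×ˢ E') (e₀, e₀') (D ×ˢ D') := by
  refine ⟨hD.1.prod hD'.1, fun ε hε => ?_⟩
  obtain ⟨δ, hδ, h⟩ := hD.2 ε hε
  obtain ⟨δ', hδ', h'⟩ := hD'.2 ε hε
  refine ⟨min δ δ', lt_min hδ hδ', ?_⟩
  rintro ⟨d, d'⟩ ⟨hd, hd'⟩ ⟨e, e'⟩ ⟨he, he'⟩ hdist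
  obtain ⟨lam, hlam, hmem⟩ := h d hd e he
    ((norm_fst_le ((e, e') - (e₀, e₀'))).trans (hdist.trans (min_le_left _ _)))
  obtain ⟨lam', hlam', hmem'⟩ := h' d' hd' e' he'
    ((norm_snd_le ((e, e') - (e₀, e₀'))).trans (hdist.trans (min_le_right _ _)))
  refine ⟨min lam lam', lt_min hlam hlam', fun t ht => ?_⟩
  obtain ⟨b, hb, hbE⟩ := hmem t ⟨ht.1, ht.2.trans (min_le_left _ _)⟩
  obtain ⟨b', hb', hbE'⟩ := hmem' t ⟨ht.1, ht.2.trans (min_le_right _ _)⟩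
  exact ⟨(b, b'), max_le hb hb', hbE, hbE'⟩

theorem isUniformTangentSet_Iic (r : ℝ) : IsUniformTangentSet (Iic r) r (Icc (-1) 0) := by
  refine ⟨isBounded_Icc (-1) 0, fun ε _ => ⟨1, one_pos, fun d hd e he _ => ?_⟩⟩
  refine ⟨1, one_pos, fun t ht => ⟨0, by simp, ?_⟩⟩
  have hstep : t • (d + ε • 0) ≤ 0 := by
    simpa using mul_nonpos_of_nonneg_of_nonpos ht.1 hd.2
  exact add_le_of_le_of_nonpos he hstep

end UniformTangentSet

section Transversality

theorem sub_mem_nhds_of_descent {Y : Type*} [NormedAddCommGroup Y] [CompleteSpace Y] {E F : Set Y}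
    {e₀ f₀ : Y} {σ : ℝ} (hE : IsClosed E) (hF : IsClosed F)
    (he₀ : e₀ ∈ E) (hf₀ : f₀ ∈ F) (hσ : 0 < σ)
    (hdescent : ∀ᶠ z : Y × Y in 𝓝 (e₀, f₀), ∀ v, z.1 ∈ E → z.2 ∈ F → z.1 - z.2 ≠ v →
      ∃ a ∈ E, ∃ b ∈ F, ‖a - b - v‖ < ‖z.1 - z.2 - v‖ ∧
        ‖a - b - v‖ + σ * dist z (a, b) ≤ ‖z.1 - z.2 - v‖) :
    E - F ∈ 𝓝 (e₀ - f₀) := by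
  obtain ⟨δ, hδ, hball⟩ := Metric.eventually_nhds_iff_ball.1 hdescent
  filter_upwards [ball_mem_nhds (e₀ - f₀) (mul_pos hσ hδ)] with v hv
  have := hE.completeSpace_coe
  have := hF.completeSpace_coe
  let gap : E × F → ℝ := fun z => ‖(z.1 : Y) - z.2 - v‖
  let start : E × F := (⟨e₀, he₀⟩, ⟨f₀, hf₀⟩)
  have hgap : Continuous gap := by fun_prop
  have hnear {z : E × F} (hz : z ∈ descentSet gap σ start) :
      ((z.1 : Y), (z.2 : Y)) ∈ ball (e₀, f₀) δ := by
    have hz' : ‖(z.1 : Y) - z.2 - v‖ + σ * dist start z ≤ ‖e₀ - f₀ - v‖ := hz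
    rw [mem_ball_iff_norm'] at hv
    rw [mem_ball']
    refine lt_of_mul_lt_mul_left (?_ : σ * dist start z < σ * δ) hσ.le
    linarith [norm_nonneg ((z.1 : Y) - z.2 - v)]
  obtain ⟨z, -, hz⟩ := exists_eq_zero_of_descent hgap.lowerSemicontinuous
    (fun z => norm_nonneg _) hσ start fun z hz hne => by
      obtain ⟨a, ha, b, hb, hlt, hle⟩ := hball _ (hnear hz) v z.1.2 z.2.2
        (sub_ne_zero.1 (norm_ne_zero_iff.1 hne))
      exact ⟨(⟨a, ha⟩, ⟨b, hb⟩), hle, hlt⟩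
  exact ⟨z.1, z.1.2, z.2, z.2.2, sub_eq_zero.1 (norm_eq_zero.1 hz)⟩

variable {Y : Type*} [NormedAddCommGroup Y] [NormedSpace ℝ Y] {E F A B : Set Y} {e₀ f₀ : Y}
  {ε ρ : ℝ}

theorem norm_add_smul_le_of_norm_add_smul_le {t : ℝ} {u d : Y} (ht : 0 ≤ t) (htu : t * ρ ≤ ‖u‖)
    (hu : u ≠ 0) (hd : ‖d + (ρ / ‖u‖) • u‖ ≤ ε) : ‖u + t • d‖ ≤ ‖u‖ - t * (ρ - ε) := by
  have hu0 : 0 < ‖u‖ := norm_pos_iff.2 hu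
  have hscale : 0 ≤ 1 - t * (ρ / ‖u‖) := by
    rw [← mul_div_assoc, sub_nonneg]
    exact div_le_one_of_le₀ htu hu0.le
  calc ‖u + t • d‖ = ‖(1 - t * (ρ / ‖u‖)) • u + t • (d + (ρ / ‖u‖) • u)‖ := by
        congr 1; module
    _ ≤ ‖(1 - t * (ρ / ‖u‖)) • u‖ + ‖t • (d + (ρ / ‖u‖) • u)‖ := norm_add_le _ _
    _ = (1 - t * (ρ / ‖u‖)) * ‖u‖ + t * ‖d + (ρ / ‖u‖) • u‖ := by
        rw [norm_smul, norm_smul, Real.norm_of_nonneg hscale, Real.norm_of_nonneg ht]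
    _ ≤ (1 - t * (ρ / ‖u‖)) * ‖u‖ + t * ε := by gcongr
    _ = ‖u‖ - t * (ρ - ε) := by field_simp; ring

theorem exists_mem_convexHull_norm_sub_add_le
    (hAB : closedBall 0 ρ ⊆ closure (convexHull ℝ (A - B))) (hρ : 0 ≤ ρ) (hε : 0 < ε) (u : Y) :
    ∃ p ∈ convexHull ℝ A, ∃ q ∈ convexHull ℝ B, ‖p - q + (ρ / ‖u‖) • u‖ ≤ ε := by
  have hmem : -((ρ / ‖u‖) • u) ∈ closure (convexHull ℝ (A - B)) := by
    refine hAB ?_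
    rw [mem_closedBall_zero_iff, norm_neg, norm_smul, norm_div, norm_norm, Real.norm_of_nonneg hρ,
      div_mul_comm]
    exact mul_le_of_le_one_left hρ (div_self_le_one _)
  rw [convexHull_sub] at hmem
  obtain ⟨_, ⟨p, hp, q, hq, rfl⟩, hdist⟩ := Metric.mem_closure_iff.1 hmem ε hε
  refine ⟨p, hp, q, hq, ?_⟩
  rw [← sub_neg_eq_add, ← dist_eq_norm, dist_comm]
  exact hdist.le

theorem exists_descent_of_mem_approxTangentSet {a b p q v : Y} (ha : a ∈ E) (hb : b ∈ F)
    (hp : p ∈ approxTangentSet E ε a) (hq : q ∈ approxTangentSet F ε b) (hv : a - b - v ≠ 0)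
    (hpq : ‖p - q + (ρ / ‖a - b - v‖) • (a - b - v)‖ ≤ ε) :
    ∃ t > 0, ∃ a' ∈ E ∩ closedBall (a + t • p) (ε * t), ∃ b' ∈ F ∩ closedBall (b + t • q) (ε * t),
      ‖a' - b' - v‖ ≤ ‖a - b - v‖ - t * (ρ - 3 * ε) := by
  have hsmall : ∀ᶠ t in 𝓝[>] (0 : ℝ), t * ρ < ‖a - b - v‖ :=
    nhdsWithin_le_nhds (((continuous_mul_const ρ).tendsto' 0 0 (zero_mul ρ)).eventually_lt_const
      (norm_pos_iff.2 hv))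
  obtain ⟨t, ⟨a', ha'⟩, ⟨b', hb'⟩, htρ, ht : 0 < t⟩ :=
    ((eventually_nonempty_of_mem_approxTangentSet ha hp).and
      ((eventually_nonempty_of_mem_approxTangentSet hb hq).and
        (hsmall.and self_mem_nhdsWithin))).exists
  refine ⟨t, ht, a', ha', b', hb', ?_⟩
  calc ‖a' - b' - v‖
      = ‖(a - b - v + t • (p - q)) + (a' - (a + t • p)) - (b' - (b + t • q))‖ := by
        congr 1; module
    _ ≤ ‖a - b - v + t • (p - q)‖ + ‖a' - (a + t • p)‖ + ‖b' - (b + t • q)‖ :=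
        (norm_sub_le _ _).trans (by gcongr; exact norm_add_le _ _)
    _ ≤ ‖a - b - v‖ - t * (ρ - ε) + ε * t + ε * t := by
        gcongr
        · exact norm_add_smul_le_of_norm_add_smul_le ht.le htρ.le hv hpq
        · exact mem_closedBall_iff_norm.1 ha'.2
        · exact mem_closedBall_iff_norm.1 hb'.2
    _ = ‖a - b - v‖ - t * (ρ - 3 * ε) := by ring

theorem dist_le_of_mem_closedBall_add_smul {a a' p : Y} {t K : ℝ} (ht : 0 ≤ t) (hp : ‖p‖ ≤ K)
    (ha' : a' ∈ closedBall (a + t • p) (ε * t)) : dist a a' ≤ t * (K + ε) := calc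
  dist a a' ≤ dist a (a + t • p) + dist (a + t • p) a' := dist_triangle _ _ _
  _ ≤ t * ‖p‖ + ε * t := by
    rw [dist_self_add_right, norm_smul, Real.norm_of_nonneg ht]
    gcongr
    exact mem_closedBall'.1 ha'
  _ ≤ t * (K + ε) := by rw [mul_add, mul_comm ε]; gcongr

theorem IsUniformTangentSet.sub_mem_nhds [CompleteSpace Y] (hA : IsUniformTangentSet E e₀ A)
    (hB : IsUniformTangentSet F f₀ B) (hE : IsClosed E) (hF : IsClosed F) (he₀ : e₀ ∈ E)
    (hf₀ : f₀ ∈ F) (hAB : 0 ∈ interior (closure (convexHull ℝ (A - B)))) :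
    E - F ∈ 𝓝 (e₀ - f₀) := by
  obtain ⟨ρ, hρ, hball⟩ := nhds_basis_closedBall.mem_iff.1 (mem_interior_iff_mem_nhds.1 hAB)
  -- With relative error `ρ / 6` the gap decreases at rate `ρ - 3 * (ρ / 6) = ρ / 2`.
  have hε : 0 < ρ / 6 := by positivity
  obtain ⟨K, hK0, hK⟩ := (isBounded_convexHull.2 (hA.1.union hB.1)).exists_pos_norm_le
  have hσ : 0 < ρ / 2 / (K + ρ / 6) := by positivity
  refine sub_mem_nhds_of_descent hE hF he₀ hf₀ hσ ?_
  filter_upwards [(hA.eventually_convexHull_subset_approxTangentSet hE hε).prod_nhds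
    (hB.eventually_convexHull_subset_approxTangentSet hF hε)] with ⟨a, b⟩ ⟨hEa, hFb⟩ v ha hb hne
  obtain ⟨p, hp, q, hq, hpq⟩ := exists_mem_convexHull_norm_sub_add_le hball hρ.le hε (a - b - v)
  obtain ⟨t, ht, a', ha', b', hb', hle⟩ := exists_descent_of_mem_approxTangentSet ha hb (hEa hp)
    (hFb hq) (sub_ne_zero.2 hne) hpq
  have hdist : dist (a, b) (a', b') ≤ t * (K + ρ / 6) := max_le
    (dist_le_of_mem_closedBall_add_smul ht.le
      (hK p (convexHull_mono subset_union_left hp)) ha'.2)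
    (dist_le_of_mem_closedBall_add_smul ht.le
      (hK q (convexHull_mono subset_union_right hq)) hb'.2)
  have hdecrease : ρ / 2 / (K + ρ / 6) * dist (a, b) (a', b') ≤ t * (ρ - 3 * (ρ / 6)) := calc
    _ ≤ ρ / 2 / (K + ρ / 6) * (t * (K + ρ / 6)) := by gcongr
    _ = t * (ρ - 3 * (ρ / 6)) := by field_simp; ring
  have hpos : 0 < t * (ρ - 3 * (ρ / 6)) := mul_pos ht (by linarith)
  exact ⟨a', ha'.1, b', hb'.1, by linarith, by linarith⟩

end Transversality

section VectorSpan

variable {k M M' : Type*} [Ring k] [AddCommGroup M] [Module k M] [AddCommGroup M'] [Module k M']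

theorem vectorSpan_le_vectorSpan_sub_left {A B : Set M} (hB : B.Nonempty) :
    vectorSpan k A ≤ vectorSpan k (A - B) := by
  obtain ⟨b, hb⟩ := hB
  refine Submodule.span_le.2 ?_
  rintro _ ⟨a, ha, a', ha', rfl⟩
  simpa using vsub_mem_vectorSpan k (sub_mem_sub ha hb) (sub_mem_sub ha' hb)

theorem vectorSpan_le_vectorSpan_sub_right {A B : Set M} (hA : A.Nonempty) :
    vectorSpan k B ≤ vectorSpan k (A - B) := by
  obtain ⟨a, ha⟩ := hA
  refine Submodule.span_le.2 ?_
  rintro _ ⟨b, hb, b', hb', rfl⟩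
  simpa using vsub_mem_vectorSpan k (sub_mem_sub ha hb') (sub_mem_sub ha hb)

theorem subset_vectorSpan_sup_span_singleton {A : Set M} {p : M} (hp : p ∈ A) :
    A ⊆ ↑(vectorSpan k A ⊔ Submodule.span k {p}) := fun a ha =>
  Submodule.mem_sup.2 ⟨a - p, vsub_mem_vectorSpan k ha hp, p, Submodule.mem_span_singleton_self p,
    sub_add_cancel a p⟩

theorem insert_zero_prod_subset_vectorSpan_sup_span_singleton {D : Set M} {T : Set M'} {v : M}
    (hv : v ∈ D) (hT : 0 ∈ T) :
    insert 0 D ×ˢ T ⊆ ↑(vectorSpan k (D ×ˢ T) ⊔ Submodule.span k {(v, 0)}) := by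
  have hv0 : (v, 0) ∈ D ×ˢ T := ⟨hv, hT⟩
  rintro ⟨w, s⟩ ⟨rfl | hw, hs⟩
  · have hvs : (v, s) ∈ D ×ˢ T := ⟨hv, hs⟩
    exact Submodule.mem_sup_left (by simpa using vsub_mem_vectorSpan k hvs hv0)
  · exact subset_vectorSpan_sup_span_singleton hv0 ⟨hw, hs⟩

end VectorSpan

section Separation

variable {Y : Type*} [NormedAddCommGroup Y] [NormedSpace ℝ Y]

theorem interior_preimage_span_nonempty {V F : Set Y} (hV : Convex ℝ V) (hV0 : 0 ∈ V)
    (hF : F.Finite) (hFV : F ⊆ V) :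
    (interior ((↑) ⁻¹' V : Set (Submodule.span ℝ F))).Nonempty := by
  have := FiniteDimensional.span_of_finite ℝ hF
  let S : Set (Submodule.span ℝ F) := (↑) ⁻¹' V
  have hS : Convex ℝ S := hV.linear_preimage (Submodule.span ℝ F).subtype
  have hS0 : 0 ∈ S := hV0
  have hspan : Submodule.span ℝ S = ⊤ :=
    top_unique (Submodule.span_span_coe_preimage.ge.trans (Submodule.span_mono (preimage_mono hFV)))
  refine hS.interior_nonempty_iff_affineSpan_eq_top.2 (SetLike.coe_injective ?_)
  rw [← insert_eq_of_mem hS0, affineSpan_insert_zero, hspan]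
  rfl

theorem interior_nonempty_of_sup_eq_top [CompleteSpace Y] {V : Set Y} (hV : Convex ℝ V)
    {L M : Submodule ℝ Y} [CompleteSpace L] [CompleteSpace M] (hLM : L ⊔ M = ⊤) {c d : Y}
    (hL : (interior ((fun l : L => c + l) ⁻¹' V)).Nonempty)
    (hM : (interior ((fun m : M => d + m) ⁻¹' V)).Nonempty) : (interior V).Nonempty := by
  let T : L × M →L[ℝ] Y := L.subtypeL.coprod M.subtypeL
  have hT : IsOpenMap T := by
    refine T.isOpenMap fun y => ?_
    obtain ⟨l, hl, m, hm, hy⟩ := Submodule.mem_sup.1 (hLM.ge (Submodule.mem_top : y ∈ ⊤))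
    exact ⟨(⟨l, hl⟩, ⟨m, hm⟩), hy⟩
  let midpoint : L × M → Y := fun z => (2⁻¹ : ℝ) • (c + d + T z)
  have hopen : IsOpenMap midpoint :=
    (isOpenMap_smul₀ (inv_ne_zero two_ne_zero)).comp ((isOpenMap_add_left _).comp hT)
  refine ((hL.prod hM).image midpoint).mono (interior_maximal ?_ ?_)
  · rintro _ ⟨⟨l, m⟩, ⟨hl, hm⟩, rfl⟩
    have hlV : l ∈ (fun l : L => c + l) ⁻¹' V := interior_subset hl
    have hmV : m ∈ (fun m : M => d + m) ⁻¹' V := interior_subset hm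
    convert hV hlV hmV (a := 2⁻¹) (b := 2⁻¹) (by norm_num) (by norm_num) (by norm_num) using 1
    simp only [midpoint, T, ContinuousLinearMap.coprod_apply, Submodule.subtypeL_apply]
    module
  · exact hopen _ (isOpen_interior.prod isOpen_interior)

theorem Quasisolid.exists_interior_preimage_nonempty {C : Set Y} (hC : Quasisolid C) :
    ∃ c : Y, (interior ((fun l : (vectorSpan ℝ C).topologicalClosure => c + l) ⁻¹'
      closure (convexHull ℝ C))).Nonempty := by
  obtain ⟨y₀, -, z, hz, ρ, hρ, hball⟩ := hC
  let L := (Submodule.span ℝ ((· - y₀) '' C)).topologicalClosure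
  have hspan : vectorSpan ℝ C ≤ Submodule.span ℝ ((· - y₀) '' C) := by
    refine Submodule.span_le.2 ?_
    rintro _ ⟨a, ha, b, hb, rfl⟩
    have hmem := sub_mem (Submodule.subset_span (R := ℝ) (mem_image_of_mem (· - y₀) ha))
      (Submodule.subset_span (mem_image_of_mem (· - y₀) hb))
    rwa [sub_sub_sub_cancel_right] at hmem
  have hzL : z ∈ L :=
    closure_mono (convexHull_min Submodule.subset_span (Submodule.convex _)) hz
  have htranslate : closure (convexHull ℝ ((· - y₀) '' C)) ⊆
      (y₀ + ·) ⁻¹' closure (convexHull ℝ C) := by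
    refine closure_minimal (convexHull_min ?_ ?_) (isClosed_closure.preimage (by fun_prop))
    · rintro _ ⟨y, hy, rfl⟩
      simpa using subset_closure (subset_convexHull ℝ C hy)
    · exact (convex_convexHull ℝ C).closure.translate_preimage_right y₀
  refine ⟨y₀ + z, 0, mem_interior_iff_mem_nhds.2 ?_⟩
  filter_upwards [ball_mem_nhds 0 hρ] with l hl
  have hlL : (l : Y) ∈ L := Submodule.topologicalClosure_mono hspan l.2
  have hmem : z + l ∈ closure (convexHull ℝ ((· - y₀) '' C)) :=
    hball ⟨add_mem hzL hlL, by simpa using hl⟩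
  simpa [add_assoc] using htranslate hmem

theorem exists_ne_zero_forall_mem_eq_zero {N : Submodule ℝ Y} (hN : IsClosed (N : Set Y))
    (hN_ne : N ≠ ⊤) : ∃ f : Y →L[ℝ] ℝ, f ≠ 0 ∧ ∀ y ∈ N, f y = 0 := by
  have := hN
  obtain ⟨y, -, hy⟩ := SetLike.exists_of_lt hN_ne.lt_top
  have hy' : N.mkQL y ≠ 0 := by simpa using hy
  obtain ⟨g, hg⟩ := SeparatingDual.exists_ne_zero (R := ℝ) hy'
  refine ⟨g ∘L N.mkQL, fun h => hg (DFunLike.congr_fun h y), fun w hw => ?_⟩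
  have hw' : N.mkQL w = 0 := by simpa using hw
  rw [ContinuousLinearMap.comp_apply, hw', map_zero]

theorem Quasisolid.exists_forall_nonpos [CompleteSpace Y] {C W F : Set Y} (hC : Quasisolid C)
    (hCW : C ⊆ W) (hW0 : 0 ∈ W) (hF : F.Finite) (hFW : F ⊆ W)
    (hW : W ⊆ ↑(vectorSpan ℝ C ⊔ Submodule.span ℝ F))
    (h0 : 0 ∉ interior (closure (convexHull ℝ W))) :
    ∃ f : Y →L[ℝ] ℝ, f ≠ 0 ∧ ∀ w ∈ W, f w ≤ 0 := by
  let L := (vectorSpan ℝ C).topologicalClosure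
  let M := Submodule.span ℝ F
  have := FiniteDimensional.span_of_finite ℝ hF
  have hL : IsClosed (L : Set Y) := Submodule.isClosed_topologicalClosure _
  have hWV : W ⊆ closure (convexHull ℝ W) := (subset_convexHull ℝ W).trans subset_closure
  have hV : Convex ℝ (closure (convexHull ℝ W)) := (convex_convexHull ℝ W).closure
  by_cases hLM : L ⊔ M = ⊤
  · obtain ⟨c, hc⟩ := hC.exists_interior_preimage_nonempty
    have hLV : (interior ((fun l : L => c + l) ⁻¹' closure (convexHull ℝ W))).Nonempty :=
      hc.mono (interior_mono (preimage_mono (closure_mono (convexHull_mono hCW))))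
    have hMV := interior_preimage_span_nonempty hV (hWV hW0) hF (hFW.trans hWV)
    have := hL.completeSpace_coe
    have hint : (interior (closure (convexHull ℝ W))).Nonempty :=
      interior_nonempty_of_sup_eq_top hV hLM hLV (d := 0) (by simpa only [zero_add] using hMV)
    obtain ⟨f, hf, hfV⟩ := geometric_hahn_banach_of_nonempty_interior_point hV h0 hint
    exact ⟨f, hf, fun w hw => by simpa using hfV w (hWV hw)⟩
  · obtain ⟨f, hf, hfN⟩ := exists_ne_zero_forall_mem_eq_zero
      (Submodule.isClosed_sup_finiteDimensional L M hL) hLM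
    have hsup : vectorSpan ℝ C ⊔ M ≤ L ⊔ M :=
      sup_le_sup_right (Submodule.le_topologicalClosure _) M
    exact ⟨f, hf, fun w hw => (hfN w (hsup (hW hw))).le⟩

theorem Quasisolid.nonempty {C : Set Y} (hC : Quasisolid C) : C.Nonempty := by
  obtain ⟨y₀, hy₀, -⟩ := hC
  exact convexHull_nonempty_iff.1 (closure_nonempty_iff.1 ⟨y₀, hy₀⟩)

theorem Quasisolid.exists_separating [CompleteSpace Y] {A B A' B' : Set Y} {p q : Y}
    (hAB : Quasisolid (A - B)) (hAA' : A ⊆ A') (hBB' : B ⊆ B') (hA'0 : 0 ∈ A') (hB'0 : 0 ∈ B')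
    (hp : p ∈ A') (hq : q ∈ B') (hA' : A' ⊆ ↑(vectorSpan ℝ A ⊔ Submodule.span ℝ {p}))
    (hB' : B' ⊆ ↑(vectorSpan ℝ B ⊔ Submodule.span ℝ {q}))
    (h0 : 0 ∉ interior (closure (convexHull ℝ (A' - B')))) :
    ∃ f : Y →L[ℝ] ℝ, f ≠ 0 ∧ (∀ a ∈ A', f a ≤ 0) ∧ ∀ b ∈ B', 0 ≤ f b := by
  have hpW : p ∈ A' - B' := ⟨p, hp, 0, hB'0, sub_zero p⟩
  have hqW : -q ∈ A' - B' := ⟨0, hA'0, q, hq, zero_sub q⟩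
  have hA'N : vectorSpan ℝ A ⊔ Submodule.span ℝ {p} ≤
      vectorSpan ℝ (A - B) ⊔ Submodule.span ℝ {p, -q} :=
    sup_le_sup (vectorSpan_le_vectorSpan_sub_left hAB.nonempty.of_sub_right)
      (Submodule.span_mono (by simp))
  have hB'N : vectorSpan ℝ B ⊔ Submodule.span ℝ {q} ≤
      vectorSpan ℝ (A - B) ⊔ Submodule.span ℝ {p, -q} := by
    refine sup_le_sup (vectorSpan_le_vectorSpan_sub_right hAB.nonempty.of_sub_left) ?_
    rw [Submodule.span_singleton_le_iff_mem, ← neg_mem_iff]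
    exact Submodule.subset_span (by simp)
  obtain ⟨f, hf, hfW⟩ := hAB.exists_forall_nonpos (sub_subset_sub hAA' hBB')
    ⟨0, hA'0, 0, hB'0, sub_zero 0⟩ (toFinite {p, -q}) (insert_subset hpW (by simpa using hqW))
    (sub_subset_iff.2 fun a ha b hb => sub_mem (hA'N (hA' ha)) (hB'N (hB' hb))) h0
  refine ⟨f, hf, fun a ha => ?_, fun b hb => ?_⟩
  · simpa using hfW (a - 0) (sub_mem_sub ha hB'0)
  · simpa using hfW (0 - b) (sub_mem_sub hA'0 hb)

theorem Quasisolid.exists_separating_insert_zero {X Z : Type*} [NormedAddCommGroup X]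
    [NormedSpace ℝ X] [CompleteSpace X] [NormedAddCommGroup Z] [NormedSpace ℝ Z] [CompleteSpace Z]
    {D : Set X} {T : Set Z} {B : Set (X × Z)} (hDB : Quasisolid (D ×ˢ T - B)) (hT : 0 ∈ T)
    (h0 : 0 ∉ interior (closure (convexHull ℝ (insert 0 D ×ˢ T - insert 0 B)))) :
    ∃ f : X × Z →L[ℝ] ℝ, f ≠ 0 ∧ (∀ a ∈ insert 0 D ×ˢ T, f a ≤ 0) ∧ ∀ b ∈ insert 0 B, 0 ≤ f b := by
  obtain ⟨_, ⟨v, _⟩, ⟨hv, _⟩, q, hq, -⟩ := hDB.nonempty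
  have hv0 : (v, (0 : Z)) ∈ insert 0 D ×ˢ T := ⟨mem_insert_of_mem 0 hv, hT⟩
  exact hDB.exists_separating (prod_mono_left (subset_insert 0 D)) (subset_insert 0 B)
    ⟨mem_insert 0 D, hT⟩ (mem_insert 0 B) hv0 (mem_insert_of_mem 0 hq)
    (insert_zero_prod_subset_vectorSpan_sup_span_singleton hv hT)
    (insert_subset (zero_mem _) (subset_vectorSpan_sup_span_singleton hq)) h0

end Separation

section Epigraph

variable {X : Type*} {φ : X → EReal}

theorem isClosed_setOf_le_coe_real [TopologicalSpace X] (hφ : LowerSemicontinuous φ) :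
    IsClosed {p : X × ℝ | φ p.1 ≤ (p.2 : EReal)} :=
  hφ.isClosed_epigraph.preimage (f := fun p : X × ℝ => (p.1, (p.2 : EReal)))
    (continuous_fst.prodMk (continuous_coe_real_ereal.comp continuous_snd))

theorem prod_Iic_sub_epigraph_notMem_nhds_zero [AddGroup X] [TopologicalSpace X] {S : Set X} {r : ℝ}
    (hmin : ∀ x ∈ S, (r : EReal) ≤ φ x) :
    S ×ˢ Iic r - {p : X × ℝ | φ p.1 ≤ (p.2 : EReal)} ∉ 𝓝 0 := by
  intro hnhds
  have hlift : Tendsto (fun h : ℝ => ((0 : X), h)) (𝓝[>] 0) (𝓝 0) :=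
    ((by fun_prop : Continuous fun h : ℝ => ((0 : X), h)).tendsto 0).mono_left nhdsWithin_le_nhds
  obtain ⟨h, ⟨⟨x, s⟩, ⟨hxS, hsr⟩, ⟨y, s'⟩, hys', heq⟩, hpos : 0 < h⟩ :=
    ((hlift.eventually hnhds).and self_mem_nhdsWithin).exists
  obtain ⟨hxy, hss'⟩ := Prod.mk.inj heq
  obtain rfl : x = y := sub_eq_zero.1 hxy
  have hrs' : r ≤ s' := EReal.coe_le_coe_iff.1 ((hmin x hxS).trans hys')
  have hsr' : s ≤ r := hsr
  linarith

end Epigraph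

theorem exists_normalized_multiplier {X : Type*} [AddCommGroup X] [Module ℝ X]
    [TopologicalSpace X] {f : X × ℝ →L[ℝ] ℝ} (hf : f ≠ 0) (hf0 : 0 ≤ f (0, 1)) :
    ∃ (ξ : X →L[ℝ] ℝ) (η : ℝ), (ξ ≠ 0 ∨ η ≠ 0) ∧ (η = 0 ∨ η = 1) ∧
      ∃ c > 0, ∀ p, f p = c * (ξ p.1 + η * p.2) := by
  let ξ : X →L[ℝ] ℝ := f ∘L ContinuousLinearMap.inl ℝ X ℝ
  have hdecomp (p : X × ℝ) : f p = ξ p.1 + f (0, 1) * p.2 := by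
    have hp : p = (p.1, 0) + p.2 • ((0 : X), (1 : ℝ)) := by simp
    conv_lhs => rw [hp, map_add, map_smul, smul_eq_mul, mul_comm]
    rfl
  rcases hf0.eq_or_lt with hzero | hpos
  · refine ⟨ξ, 0, .inl fun hξ => hf ?_, .inl rfl, 1, one_pos, fun p => ?_⟩
    · refine ContinuousLinearMap.ext fun p => ?_
      rw [hdecomp, hξ, ← hzero, zero_apply, zero_mul, add_zero, zero_apply]
    · rw [hdecomp, ← hzero, one_mul]
  · refine ⟨(f (0, 1))⁻¹ • ξ, 1, .inr one_ne_zero, .inr rfl, f (0, 1), hpos, fun p => ?_⟩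
    rw [hdecomp, smul_apply, smul_eq_mul]
    field_simp

/-- Abstract Lagrange multiplier rule. -/
theorem abstract_lagrange_multiplier_rule
    {X : Type*} [NormedAddCommGroup X] [NormedSpace ℝ X] [CompleteSpace X]
    (φ : X → EReal) (hφbot : ∀ x, φ x ≠ ⊥) (hlsc : LowerSemicontinuous φ)
    (hproper : ∃ x, φ x ≠ ⊤)
    (S : Set X) (hS : IsClosed S)
    (xbar : X) (hxbar : xbar ∈ S) (hmin : ∀ x ∈ S, φ xbar ≤ φ x)
    (r : ℝ) (hr : φ xbar = (r : EReal))
    (DS : Set X) (hDS : IsUniformTangentSet S xbar DS)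
    (DR : Set (X × ℝ))
    (hDR : IsUniformTangentSet {p : X × ℝ | φ p.1 ≤ (p.2 : EReal)} (xbar, r) DR)
    (hqs : Quasisolid ((DS ×ˢ Set.Icc (-1 : ℝ) 0) - DR)) :
    ∃ (ξ : X →L[ℝ] ℝ) (η : ℝ),
      (ξ ≠ 0 ∨ η ≠ 0) ∧ (η = 0 ∨ η = 1) ∧
      (∀ v ∈ DS, ξ v ≤ 0) ∧
      (∀ p ∈ DR, 0 ≤ ξ p.1 + η * p.2) := by
  have hDS' := hDS.insert_zero.prod (isUniformTangentSet_Iic r)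
  have h0 : 0 ∉ interior (closure
      (convexHull ℝ (insert 0 DS ×ˢ Icc (-1 : ℝ) 0 - insert 0 DR))) := fun h0 => by
    have hnhds := hDS'.sub_mem_nhds hDR.insert_zero (hS.prod isClosed_Iic)
      (isClosed_setOf_le_coe_real hlsc) ⟨hxbar, self_mem_Iic⟩ hr.le h0
    rw [sub_self] at hnhds
    exact prod_Iic_sub_epigraph_notMem_nhds_zero (fun x hx => hr ▸ hmin x hx) hnhds
  obtain ⟨f, hf, hfS, hfR⟩ := hqs.exists_separating_insert_zero (by simp) h0
  have hf0 : 0 ≤ f (0, 1) := by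
    have hneg := hfS (-(0, 1)) (by simp)
    rwa [map_neg, neg_nonpos] at hneg
  obtain ⟨ξ, η, hne, hη, c, hc, hfc⟩ := exists_normalized_multiplier hf hf0
  refine ⟨ξ, η, hne, hη, fun v hv => ?_, fun p hp => ?_⟩
  · have hv0 := hfS (v, 0) ⟨mem_insert_of_mem 0 hv, by simp⟩
    rw [hfc, mul_zero, add_zero] at hv0
    exact nonpos_of_mul_nonpos_right hv0 hc
  · exact nonneg_of_mul_nonneg_right (hfc p ▸ hfR p (mem_insert_of_mem 0 hp)) hc
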